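/- Assume in addition that μᵉ − μⁱ ≥ α₁ and 2(μᵉ − μⁱ) + 3(λᵉ − λⁱ) ≥ γ₁ for some positive constants α₁, γ₁. Then for every symmetric real 3×3 matrix A, 𝕄A · A ≥ min{2α₁, γ₁} |A|². -/

import Mathlib

open Matrix

/-- Symmetric part of a matrix. -/
noncomputable def symPart (A : Matrix (Fin 3) (Fin 3) ℝ) : Matrix (Fin 3) (Fin 3) ℝ :=
  (1 / 2 : ℝ) • (A + Aᵀ)

/-- Isotropic elasticity tensor with Lamé parameters `lam`, `mu`:
`ℂ A = 2μ Â + λ (tr A) I₃`. -/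
noncomputable def elastC (lam mu : ℝ) (A : Matrix (Fin 3) (Fin 3) ℝ) :
    Matrix (Fin 3) (Fin 3) ℝ :=
  (2 * mu) • symPart A + (lam * A.trace) • (1 : Matrix (Fin 3) (Fin 3) ℝ)

/-- The difference tensor `ℂᵉ − ℂⁱ` applied to `A`. -/
noncomputable def Cdiff (lami mui lame mue : ℝ) (A : Matrix (Fin 3) (Fin 3) ℝ) :
    Matrix (Fin 3) (Fin 3) ℝ :=
  elastC lame mue A - elastC lami mui A

/-- `Q` is the inverse of the positive definite matrix `μⁱI₃ + (λⁱ+μⁱ) n⊗n`. -/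
noncomputable def Qmat (lami mui : ℝ) (n : Fin 3 → ℝ) : Matrix (Fin 3) (Fin 3) ℝ :=
  (mui • (1 : Matrix (Fin 3) (Fin 3) ℝ) + (lami + mui) • vecMulVec n n)⁻¹

/-- The elastic moment tensor
`𝕄A = (ℂᵉ−ℂⁱ)A + (ℂᵉ−ℂⁱ)[(Q((ℂᵉ−ℂⁱ)A n))⊗n]`. -/
noncomputable def emt (lami mui lame mue : ℝ) (n : Fin 3 → ℝ)
    (A : Matrix (Fin 3) (Fin 3) ℝ) : Matrix (Fin 3) (Fin 3) ℝ :=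
  Cdiff lami mui lame mue A +
    Cdiff lami mui lame mue
      (vecMulVec ((Qmat lami mui n).mulVec ((Cdiff lami mui lame mue A).mulVec n)) n)


/-- Frobenius inner product of real 3×3 matrices. -/
def frob (A B : Matrix (Fin 3) (Fin 3) ℝ) : ℝ := ∑ i, ∑ j, A i j * B i j

/-- Frobenius norm of a real 3×3 matrix. -/
noncomputable def frobNorm (A : Matrix (Fin 3) (Fin 3) ℝ) : ℝ := Real.sqrt (frob A A)

lemma frob_Cdiff_comm (a b c d : ℝ) (X A : Matrix (Fin 3) (Fin 3) ℝ) :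
    frob (Cdiff a b c d X) A = frob X (Cdiff a b c d A) := by
  simp [frob, Cdiff, elastC, symPart, Fin.sum_univ_three, Matrix.trace, Matrix.one_apply]
  ring

lemma frob_add_left' (X Y A : Matrix (Fin 3) (Fin 3) ℝ) :
    frob (X + Y) A = frob X A + frob Y A := by
  simp [frob, Fin.sum_univ_three]
  ring

lemma frob_vecMulVec (w n : Fin 3 → ℝ) (B : Matrix (Fin 3) (Fin 3) ℝ) :
    frob (vecMulVec w n) B = B.mulVec n ⬝ᵥ w := by
  simp [frob, Fin.sum_univ_three, vecMulVec_apply, mulVec, dotProduct]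
  ring

lemma frob_self_nonneg (X : Matrix (Fin 3) (Fin 3) ℝ) : 0 ≤ frob X X :=
  Finset.sum_nonneg fun _ _ => Finset.sum_nonneg fun _ _ => mul_self_nonneg _

lemma Qmat_nonneg (lami mui : ℝ) (hmui : mui > 0) (hsum : lami + mui > 0)
    (n v : Fin 3 → ℝ) : 0 ≤ v ⬝ᵥ (Qmat lami mui n).mulVec v := by
  have hP : (mui • (1 : Matrix (Fin 3) (Fin 3) ℝ) + (lami + mui) • vecMulVec n n).PosDef := by
    refine (Matrix.PosDef.one.smul hmui).add_posSemidef (Matrix.PosSemidef.smul ?_ hsum.le)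
    simpa using Matrix.posSemidef_vecMulVec_self_star n
  simpa [Qmat] using hP.inv.posSemidef.dotProduct_mulVec_nonneg v

lemma frob_Cdiff_self (a b c d : ℝ) (A : Matrix (Fin 3) (Fin 3) ℝ) (hA : A.IsSymm) :
    frob (Cdiff a b c d A) A = 2 * (d - b) * frob (A - (A.trace / 3) • 1) (A - (A.trace / 3) • 1)
      + (2 * (d - b) + 3 * (c - a)) * (A.trace ^ 2 / 3) := by
  have e1 := hA.apply 0 1
  have e2 := hA.apply 0 2
  have e3 := hA.apply 1 2
  simp [frob, Cdiff, elastC, symPart, Fin.sum_univ_three, Matrix.trace, Matrix.one_apply, e1, e2, e3]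
  ring

lemma frob_self_split (A : Matrix (Fin 3) (Fin 3) ℝ) :
    frob A A = frob (A - (A.trace / 3) • 1) (A - (A.trace / 3) • 1) + A.trace ^ 2 / 3 := by
  simp [frob, Fin.sum_univ_three, Matrix.trace, Matrix.one_apply]
  ring

/-- Positivity of the elastic moment tensor under the monotonicity assumption
`μᵉ − μⁱ ≥ α₁ > 0`, `2(μᵉ−μⁱ) + 3(λᵉ−λⁱ) ≥ γ₁ > 0`:
`𝕄A · A ≥ min{2α₁, γ₁} |A|²` for every symmetric `A`. -/
theorem emt_positivity (lami mui lame mue a1 g1 : ℝ)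
    (hmui : mui > 0) (hsum : lami + mui > 0)
    (n : Fin 3 → ℝ) (hn : n ⬝ᵥ n = 1)
    (ha1 : a1 > 0) (hg1 : g1 > 0)
    (h1 : mue - mui ≥ a1) (h2 : 2 * (mue - mui) + 3 * (lame - lami) ≥ g1)
    (A : Matrix (Fin 3) (Fin 3) ℝ) (hA : A.IsSymm) :
    frob (emt lami mui lame mue n A) A ≥ min (2 * a1) g1 * frobNorm A ^ 2 := by
  have hQ := Qmat_nonneg lami mui hmui hsum n ((Cdiff lami mui lame mue A).mulVec n)
  rw [frobNorm, Real.sq_sqrt (frob_self_nonneg A), emt, frob_add_left', frob_Cdiff_comm _ _ _ _ (vecMulVec _ _),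
    frob_vecMulVec, frob_Cdiff_self _ _ _ _ A hA, frob_self_split A]
  have hd := frob_self_nonneg (A - (A.trace / 3) • 1)
  have ht : 0 ≤ A.trace ^ 2 / 3 := by positivity
  have m1 : min (2 * a1) g1 ≤ 2 * (mue - mui) := (min_le_left _ _).trans (by linarith)
  have m2 : min (2 * a1) g1 ≤ 2 * (mue - mui) + 3 * (lame - lami) :=
    (min_le_right _ _).trans h2
  have k1 := mul_le_mul_of_nonneg_right m1 hd
  have k2 := mul_le_mul_of_nonneg_right m2 ht
  linarith
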